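/- arXiv:1810.05190 — 2 statements merged into one kernel-verified Lean document; each statement's English description precedes it below -/
import Mathlib

section
/- Let n, q be natural numbers. There exists a natural number m₀ = m₀(n,q) (one may take m₀ = (n+1)·((6q−2)^T + 2q−1) where T = n² + (n−1)²) such that for all natural numbers p and m with p ≤ 2q−1 and m ≥ m₀, Breaker has a winning strategy for the (p,q)-crossing game on Λ_{m×n}. -/
namespace CrossingGames

/-- A vertex of the square integer lattice `ℤ²`. -/
abbrev Vtx : Type := ℤ × ℤ

/-- An edge of the square integer lattice `ℤ²`, encoded as a base vertex together with a
direction: `(v, true)` is the horizontal edge joining `v = (x,y)` to `(x+1,y)`, while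
`(v, false)` is the vertical edge joining `v = (x,y)` to `(x,y+1)`. -/
abbrev Edge : Type := Vtx × Bool

/-- The two endpoints of an edge. -/
def ends (e : Edge) : Vtx × Vtx :=
  (e.1, if e.2 then (e.1.1 + 1, e.1.2) else (e.1.1, e.1.2 + 1))

/-- The edge `e` joins the vertices `u` and `v`. -/
def joins (e : Edge) (u v : Vtx) : Prop :=
  ((ends e).1 = u ∧ (ends e).2 = v) ∨ ((ends e).1 = v ∧ (ends e).2 = u)

/-- The vertex set of the grid `Λ_{m×n}`: all `(x,y) ∈ ℤ²` with `1 ≤ x ≤ m`, `1 ≤ y ≤ n`. -/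
def lamVtx (m n : ℕ) : Set Vtx :=
  {v | 1 ≤ v.1 ∧ v.1 ≤ (m : ℤ) ∧ 1 ≤ v.2 ∧ v.2 ≤ (n : ℤ)}

/-- The edge set of the grid `Λ_{m×n}`: lattice edges with both endpoints in `Λ_{m×n}`. -/
def lamEdges (m n : ℕ) : Set Edge :=
  {e | (ends e).1 ∈ lamVtx m n ∧ (ends e).2 ∈ lamVtx m n}

/-- The edge set of the board `S_{m×n}`: the grid `Λ_{m×n}` with all of its leftmost and
rightmost vertical edges deleted. -/
def sEdges (m n : ℕ) : Set Edge :=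
  {e ∈ lamEdges m n | ¬ (e.2 = false ∧ (e.1.1 = 1 ∨ e.1.1 = (m : ℤ)))}

/-- The list of consecutive pairs of a list. -/
def cp {α : Type*} (l : List α) : List (α × α) := l.zip l.tail

/-- `S` contains all the edges of a left-right crossing path of a board with `m` columns
and `n` rows: a path of edges of `S` joining a vertex `(1,y)` on the left-hand side of the
board to a vertex `(m,y')` on its right-hand side. -/
def HasCrossing (m n : ℕ) (S : Set Edge) : Prop :=
  ∃ l : List Vtx,
    (∃ v, l.head? = some v ∧ v.1 = 1) ∧
    (∃ v, l.getLast? = some v ∧ v.1 = (m : ℤ)) ∧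
    (∀ v ∈ l, v ∈ lamVtx m n) ∧
    ∀ p ∈ cp l, ∃ e ∈ S, joins e p.1 p.2

/-- A strategy: given the list of all moves played so far (oldest first), produce the
next move (a finite set of edges to claim). -/
abbrev Strategy : Type := List (Finset Edge) → Finset Edge

/-- The union of the moves sitting in positions of the given parity of a history
(`true`: positions 0, 2, 4, …; `false`: positions 1, 3, 5, …). -/
def altUnion : Bool → List (Finset Edge) → Finset Edge
  | _, [] => ∅
  | true, mv :: h => mv ∪ altUnion false h
  | false, _ :: h => altUnion true h

/-- All edges claimed by the player moving first (i.e. on even positions) in a history. -/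
def firstClaimed (h : List (Finset Edge)) : Finset Edge := altUnion true h

/-- All edges claimed by the player moving second (i.e. on odd positions) in a history. -/
def secondClaimed (h : List (Finset Edge)) : Finset Edge := altUnion false h

/-- All edges claimed so far in a history. -/
def allClaimed (h : List (Finset Edge)) : Finset Edge := h.foldr (· ∪ ·) ∅

/-- The history of moves (oldest first) after `t` full rounds, when the player moving
first uses strategy `σ` and the player moving second uses strategy `τ`. -/
def hist (σ τ : Strategy) : ℕ → List (Finset Edge)
  | 0 => []
  | t + 1 =>
    let h := hist σ τ t
    h ++ [σ h, τ (h ++ [σ h])]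

/-- The move `mv` is legal on `board` after the history `h` for a player of bias `k`: it
consists of as-yet-unclaimed edges of the board, and there are exactly `k` of them, unless
fewer than `k` unclaimed edges remain, in which case the player claims all of them. -/
def LegalMove (board : Set Edge) (h : List (Finset Edge)) (k : ℕ) (mv : Finset Edge) : Prop :=
  (↑mv : Set Edge) ⊆ board \ ↑(allClaimed h) ∧
    (mv.card = k ∨ (mv.card < k ∧ board \ ↑(allClaimed h) ⊆ (↑mv : Set Edge)))

/-- The player moving first (with bias `p`) always moves legally when playing `σ`
against `τ`. -/
def FirstLegal (board : Set Edge) (p : ℕ) (σ τ : Strategy) : Prop :=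
  ∀ t, LegalMove board (hist σ τ t) p (σ (hist σ τ t))

/-- The player moving second (with bias `q`) always moves legally when playing `τ`
against `σ`. -/
def SecondLegal (board : Set Edge) (q : ℕ) (σ τ : Strategy) : Prop :=
  ∀ t, LegalMove board (hist σ τ t ++ [σ (hist σ τ t)]) q (τ (hist σ τ t ++ [σ (hist σ τ t)]))

/-- Maker (playing first and claiming `p` edges per turn) has a winning strategy for the
Maker–Breaker game on `board` in which Breaker claims `q` edges per turn: she can
guarantee that at some point her claimed edges satisfy the winning condition `win`. -/
def MakerWins (board : Set Edge) (win : Set Edge → Prop) (p q : ℕ) : Prop :=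
  ∃ σ : Strategy, ∀ τ : Strategy, SecondLegal board q σ τ →
    FirstLegal board p σ τ ∧ ∃ t, win ↑(firstClaimed (hist σ τ t))

/-- Breaker (playing second and claiming `q` edges per turn) has a winning strategy for
the Maker–Breaker game on `board` in which Maker claims `p` edges per turn: he can
forever prevent Maker's claimed edges from satisfying the winning condition `win`. -/
def BreakerWins (board : Set Edge) (win : Set Edge → Prop) (p q : ℕ) : Prop :=
  ∃ τ : Strategy, ∀ σ : Strategy, FirstLegal board p σ τ →
    SecondLegal board q σ τ ∧ ∀ t, ¬ win ↑(firstClaimed (hist σ τ t))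

/-!
Cut disjoint copies of a self-dual board out of the lattice, side by side. On a single copy Breaker
wins by pairing if he moves first: orient the edges so that every vertex is the head of at most two
of them and pair the edges with a common head. Maker then owns at most one edge into each vertex, so
a path of hers that enters the copy from the right must follow the orientation, and the orientation
allows it to leave on the left only through the bottom left edge, which Breaker claims at the start.

Breaker needs just one copy on which he never falls behind, and gets it by making the number of free
edges shrink on many copies at once. In phase `k` he turns to copies with `k + 1` free edges and on
each claims the edge that his pairing strategy calls for, leaving `k` free edges. Maker needs two
moves to spoil such a copy, so each round brings Breaker `2 * q` units of progress, of which Maker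
destroys at most `2 * q - 1`. Hence a phase that starts with `6 * q - 2` times as many copies as are
needed in the next one succeeds, and a copy without free edges is safe.
-/

section Histories

lemma altUnion_append_of_even {h : List (Finset Edge)} (hh : Even h.length) (b : Bool)
    (h' : List (Finset Edge)) : altUnion b (h ++ h') = altUnion b h ∪ altUnion b h' := by
  induction h using List.twoStepInduction with
  | nil => simp [altUnion]
  | singleton x => simp at hh
  | cons_cons x y t ih _ =>
    have ht : Even t.length := by simpa [Nat.even_add_one] using hh
    cases b <;> simp [altUnion, ih ht, Finset.union_assoc]

lemma allClaimed_eq_union (h : List (Finset Edge)) :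
    allClaimed h = firstClaimed h ∪ secondClaimed h := by
  induction h with
  | nil => rfl
  | cons x t ih =>
    change x ∪ allClaimed t = (x ∪ secondClaimed t) ∪ firstClaimed t
    rw [ih, Finset.union_assoc, Finset.union_comm (firstClaimed t)]

variable (σ τ : Strategy) (t : ℕ)

lemma even_length_hist : Even (hist σ τ t).length := by
  induction t with
  | zero => simp [hist]
  | succ t ih => simpa [hist, Nat.even_add_one] using ih

lemma firstClaimed_hist_append_singleton (a : Finset Edge) :
    firstClaimed (hist σ τ t ++ [a]) = firstClaimed (hist σ τ t) ∪ a := by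
  simp [firstClaimed, altUnion_append_of_even (even_length_hist σ τ t), altUnion]

lemma secondClaimed_hist_append_singleton (a : Finset Edge) :
    secondClaimed (hist σ τ t ++ [a]) = secondClaimed (hist σ τ t) := by
  simp [secondClaimed, altUnion_append_of_even (even_length_hist σ τ t), altUnion]

lemma firstClaimed_hist_succ :
    firstClaimed (hist σ τ (t + 1)) = firstClaimed (hist σ τ t) ∪ σ (hist σ τ t) := by
  simp [firstClaimed, hist, altUnion_append_of_even (even_length_hist σ τ t), altUnion]

lemma secondClaimed_hist_succ :
    secondClaimed (hist σ τ (t + 1)) =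
      secondClaimed (hist σ τ t) ∪ τ (hist σ τ t ++ [σ (hist σ τ t)]) := by
  simp [secondClaimed, hist, altUnion_append_of_even (even_length_hist σ τ t), altUnion]

end Histories

section Strategies

open scoped Finset

variable {board : Set Edge} {h : List (Finset Edge)} {k : ℕ}

lemma LegalMove.card_le {mv : Finset Edge} (hmv : LegalMove board h k mv) : #mv ≤ k :=
  hmv.2.elim le_of_eq fun hlt => hlt.1.le

lemma LegalMove.disjoint_allClaimed {mv : Finset Edge} (hmv : LegalMove board h k mv) :
    Disjoint mv (allClaimed h) :=
  Finset.disjoint_left.2 fun _ he => (hmv.1 he).2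

lemma exists_legalMove_superset (hboard : board.Finite) {mv : Finset Edge}
    (hmv : (mv : Set Edge) ⊆ board \ allClaimed h) (hcard : #mv ≤ k) :
    ∃ mv', mv ⊆ mv' ∧ LegalMove board h k mv' := by
  have hfree : (board \ allClaimed h).Finite := hboard.subset Set.sdiff_subset
  obtain ⟨F, hF⟩ := hfree.exists_finset_coe
  simp only [LegalMove, ← hF, Finset.coe_subset] at hmv ⊢
  rcases le_or_gt k #F with hk | hk
  · obtain ⟨G, hmvG, hGF, hG⟩ := Finset.exists_subsuperset_card_eq hmv hcard hk
    exact ⟨G, hmvG, hGF, Or.inl hG⟩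
  · exact ⟨F, hmv, subset_rfl, Or.inr ⟨hk, subset_rfl⟩⟩

theorem breakerWins_of_invariant (hboard : board.Finite) {win : Set Edge → Prop} {p q : ℕ}
    {Inv : Finset Edge → Finset Edge → Prop} (init : Inv ∅ ∅)
    (not_win : ∀ {M B}, Inv M B → ¬ win M)
    (union_right : ∀ {M B C}, Disjoint M C → Inv M B → Inv M (B ∪ C))
    (reply : ∀ {M B mv}, Inv M B → Disjoint mv (M ∪ B) → #mv ≤ p →
      ∃ br : Finset Edge, (br : Set Edge) ⊆ board \ ↑(M ∪ mv ∪ B) ∧ #br ≤ q ∧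
        Inv (M ∪ mv) (B ∪ br)) :
    BreakerWins board win p q := by
  classical
  let IsGood (h : List (Finset Edge)) (br : Finset Edge) : Prop :=
    LegalMove board h q br ∧ Inv (firstClaimed h) (secondClaimed h ∪ br)
  let τ : Strategy := fun h => if hex : ∃ br, IsGood h br then hex.choose else ∅
  have τ_good {h} (hex : ∃ br, IsGood h br) : IsGood h (τ h) := by
    simpa only [τ, dif_pos hex] using hex.choose_spec
  refine ⟨τ, fun σ hσ => ?_⟩
  have good_of_inv (t) (ht : Inv (firstClaimed (hist σ τ t)) (secondClaimed (hist σ τ t))) :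
      IsGood (hist σ τ t ++ [σ (hist σ τ t)]) (τ (hist σ τ t ++ [σ (hist σ τ t)])) := by
    obtain ⟨br, hbr, hcard, hinv⟩ := reply ht
      (by simpa only [allClaimed_eq_union] using (hσ t).disjoint_allClaimed) (hσ t).card_le
    rw [← firstClaimed_hist_append_singleton,
      ← secondClaimed_hist_append_singleton σ τ t (σ (hist σ τ t))] at hbr hinv
    rw [← allClaimed_eq_union] at hbr
    obtain ⟨br', hsub, hlegal⟩ := exists_legalMove_superset hboard hbr hcard
    have hdisj := hlegal.disjoint_allClaimed
    rw [allClaimed_eq_union, Finset.disjoint_union_right] at hdisj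
    refine τ_good ⟨br', hlegal, ?_⟩
    simpa only [Finset.union_assoc, Finset.union_eq_right.2 hsub]
      using union_right hdisj.1.symm hinv
  have inv (t) : Inv (firstClaimed (hist σ τ t)) (secondClaimed (hist σ τ t)) := by
    induction t with
    | zero => exact init
    | succ t ih =>
      rw [firstClaimed_hist_succ, secondClaimed_hist_succ]
      simpa only [firstClaimed_hist_append_singleton, secondClaimed_hist_append_singleton]
        using (good_of_inv t ih).2
  exact ⟨fun t => (good_of_inv t (inv t)).1, fun t => not_win (inv t)⟩

end Strategies

/-- A board on which Breaker, moving first, follows a pairing strategy: he claims `root`, and from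
then on answers each edge of Maker by its mate. The pairing is encoded as a graph of maximum degree
at most one on the edges of the board, so that an edge may also be left unpaired. -/
structure PairingBoard (α : Type*) where
  edges : Finset α
  root : α
  root_mem : root ∈ edges
  mates : SimpleGraph α
  mem_of_adj : ∀ {a b}, mates.Adj a b → a ∈ edges
  eq_of_adj : ∀ {a b c}, mates.Adj a b → mates.Adj a c → b = c

namespace PairingBoard

open scoped Finset

section Single

variable {α : Type*} (P : PairingBoard α)

/-- Breaker, having claimed `B` against Maker's `M`, is up to date with his pairing strategy. -/
def Guarded (M B : Finset α) : Prop :=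
  P.root ∈ B ∧ ∀ ⦃a b⦄, P.mates.Adj a b → a ∈ M → b ∈ B

variable {P} in
lemma Guarded.mono_right {M B B' : Finset α} (h : P.Guarded M B) (hB : B ⊆ B') :
    P.Guarded M B' :=
  ⟨hB h.1, fun _ _ hab ha => hB (h.2 hab ha)⟩

variable [DecidableEq α]

/-- Breaker can get up to date with his pairing strategy by claiming at most one further edge. -/
def Guardable (M B : Finset α) : Prop :=
  ∃ f ∈ P.edges, f ∉ M ∧ P.Guarded M (insert f B)

/-- The edges of the board claimed by neither player. -/
def free (M B : Finset α) : Finset α := P.edges \ (M ∪ B)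

/-- Breaker is up to date on the board and at most `k` of its edges are free; he can afford to let
Maker move once more on it. -/
def Ahead (k : ℕ) (M B : Finset α) : Prop := P.Guarded M B ∧ #(P.free M B) ≤ k

/-- Breaker can still get up to date on the board and at most `k` of its edges are free. -/
def Ready (k : ℕ) (M B : Finset α) : Prop := P.Guardable M B ∧ #(P.free M B) ≤ k

variable {P} {M M' B B' : Finset α} {e : α} {k : ℕ}

lemma free_subset_free (hM : M ⊆ M') (hB : B ⊆ B') : P.free M' B' ⊆ P.free M B :=
  Finset.sdiff_subset_sdiff subset_rfl (Finset.union_subset_union hM hB)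

lemma free_insert_right : P.free M (insert e B) = (P.free M B).erase e := by
  rw [free, Finset.union_insert, Finset.sdiff_insert, free]

lemma Guardable.mono_right (h : P.Guardable M B) (hB : B ⊆ B') : P.Guardable M B' :=
  h.imp fun f hf => ⟨hf.1, hf.2.1, hf.2.2.mono_right (Finset.insert_subset_insert f hB)⟩

lemma Ahead.mono_right (h : P.Ahead k M B) (hB : B ⊆ B') : P.Ahead k M B' :=
  ⟨h.1.mono_right hB, (Finset.card_le_card (free_subset_free subset_rfl hB)).trans h.2⟩

lemma Ready.mono_right (h : P.Ready k M B) (hB : B ⊆ B') : P.Ready k M B' :=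
  ⟨h.1.mono_right hB, (Finset.card_le_card (free_subset_free subset_rfl hB)).trans h.2⟩

lemma Guarded.guardable (h : P.Guarded M B) (hdis : Disjoint M B) : P.Guardable M B :=
  ⟨P.root, P.root_mem, Finset.disjoint_right.1 hdis h.1,
    h.mono_right (Finset.subset_insert _ _)⟩

lemma Ahead.ready (h : P.Ahead k M B) (hdis : Disjoint M B) : P.Ready k M B :=
  ⟨h.1.guardable hdis, h.2⟩

lemma Guardable.root_notMem (h : P.Guardable M B) (hdis : Disjoint M B) : P.root ∉ M := by
  obtain ⟨f, -, hfM, hroot, -⟩ := h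
  exact Finset.disjoint_right.1 (Finset.disjoint_insert_right.2 ⟨hfM, hdis⟩) hroot

lemma Guardable.isIndepSet (h : P.Guardable M B) (hdis : Disjoint M B) :
    P.mates.IsIndepSet (M : Set α) := by
  obtain ⟨f, -, hfM, -, hmates⟩ := h
  exact fun a ha b hb _ hab =>
    Finset.disjoint_right.1 (Finset.disjoint_insert_right.2 ⟨hfM, hdis⟩) (hmates hab ha) hb

lemma Guarded.insert_left_of_notMem (h : P.Guarded M B) (he : e ∉ P.edges) :
    P.Guarded (insert e M) B := by
  refine ⟨h.1, fun a b hab ha => h.2 hab (Finset.mem_of_mem_insert_of_ne ha ?_)⟩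
  rintro rfl
  exact he (P.mem_of_adj hab)

lemma Guardable.insert_left_of_notMem (h : P.Guardable M B) (he : e ∉ P.edges) :
    P.Guardable (insert e M) B := by
  obtain ⟨f, hf, hfM, hg⟩ := h
  have hfe : f ≠ e := ne_of_mem_of_not_mem hf he
  exact ⟨f, hf, by simp [hfe, hfM], hg.insert_left_of_notMem he⟩

lemma Ahead.insert_left_of_notMem (h : P.Ahead k M B) (he : e ∉ P.edges) :
    P.Ahead k (insert e M) B :=
  ⟨h.1.insert_left_of_notMem he,
    (Finset.card_le_card (free_subset_free (Finset.subset_insert _ _) subset_rfl)).trans h.2⟩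

lemma Ready.insert_left_of_notMem (h : P.Ready k M B) (he : e ∉ P.edges) :
    P.Ready k (insert e M) B :=
  ⟨h.1.insert_left_of_notMem he,
    (Finset.card_le_card (free_subset_free (Finset.subset_insert _ _) subset_rfl)).trans h.2⟩

lemma Guarded.guardable_insert_left (h : P.Guarded M B) (hdis : Disjoint M B) (he : e ∉ B) :
    P.Guardable (insert e M) B := by
  by_cases hmate : ∃ f, P.mates.Adj e f
  · obtain ⟨f, hef⟩ := hmate
    have hfM : f ∉ M := fun hf => he (h.2 hef.symm hf)
    refine ⟨f, P.mem_of_adj hef.symm, by simp [hef.ne', hfM], Finset.mem_insert_of_mem h.1,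
      fun a b hab ha => ?_⟩
    rcases Finset.mem_insert.1 ha with rfl | ha
    · exact P.eq_of_adj hab hef ▸ Finset.mem_insert_self _ _
    · exact Finset.mem_insert_of_mem (h.2 hab ha)
  · have hg : P.Guarded (insert e M) B := by
      refine ⟨h.1, fun a b hab ha => h.2 hab (Finset.mem_of_mem_insert_of_ne ha ?_)⟩
      rintro rfl
      exact hmate ⟨b, hab⟩
    exact hg.guardable (Finset.disjoint_insert_left.2 ⟨he, hdis⟩)

lemma Ahead.ready_insert_left (h : P.Ahead k M B) (hdis : Disjoint M B) (he : e ∉ B) :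
    P.Ready k (insert e M) B :=
  ⟨h.1.guardable_insert_left hdis he,
    (Finset.card_le_card (free_subset_free (Finset.subset_insert _ _) subset_rfl)).trans h.2⟩

lemma Ready.zero_insert_left (h : P.Ready 0 M B) (he : e ∉ M ∪ B) :
    P.Ready 0 (insert e M) B := by
  have hfree : P.free M B = ∅ := by simpa using h.2
  exact h.insert_left_of_notMem fun hmem =>
    he (Finset.sdiff_eq_empty_iff_subset.1 hfree hmem)

lemma Ready.exists_ahead_insert_right (h : P.Ready (k + 1) M B) (hk : ¬ P.Ready k M B) :
    ∃ e ∈ P.edges, e ∉ M ∪ B ∧ P.Ahead k M (insert e B) := by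
  obtain ⟨⟨f, hf, hfM, hg⟩, hcard⟩ := h
  have exists_of_free (e) (he : e ∈ P.free M B) (hge : P.Guarded M (insert e B)) :
      ∃ e ∈ P.edges, e ∉ M ∪ B ∧ P.Ahead k M (insert e B) := by
    refine ⟨e, (Finset.mem_sdiff.1 he).1, (Finset.mem_sdiff.1 he).2, hge, ?_⟩
    rw [free_insert_right, Finset.card_erase_of_mem he]
    omega
  by_cases hfB : f ∈ B
  · have hlt : k < #(P.free M B) := not_le.1 fun hle => hk ⟨⟨f, hf, hfM, hg⟩, hle⟩
    obtain ⟨e, he⟩ := Finset.card_pos.1 (Nat.zero_lt_of_lt hlt)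
    rw [Finset.insert_eq_of_mem hfB] at hg
    exact exists_of_free e he (hg.mono_right (Finset.subset_insert _ _))
  · exact exists_of_free f (by simp [free, hf, hfM, hfB]) hg

end Single

section Family

open scoped Function

variable {α ι : Type*} [DecidableEq α] [Fintype ι] (P : ι → PairingBoard α)

open Classical in
/-- The boards of the family on which Breaker is ready with at most `k` free edges. -/
noncomputable def readyBoards (k : ℕ) (M B : Finset α) : Finset ι := {i | (P i).Ready k M B}

open Classical in
/-- The boards of the family on which Breaker is ahead with at most `k` free edges. -/
noncomputable def aheadBoards (k : ℕ) (M B : Finset α) : Finset ι := {i | (P i).Ahead k M B}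

/-- Breaker's progress in reducing the number of free edges to `k`. A board counts once if he is
merely ready and twice if he is ahead: this is the number of moves Maker needs to spoil it. -/
noncomputable def score (k : ℕ) (M B : Finset α) : ℕ :=
  #(aheadBoards P k M B) + #(readyBoards P k M B)

variable {P} {k : ℕ} {M B B' : Finset α} {e : α}

@[simp]
lemma mem_readyBoards {i : ι} : i ∈ readyBoards P k M B ↔ (P i).Ready k M B := by
  simp [readyBoards]

@[simp]
lemma mem_aheadBoards {i : ι} : i ∈ aheadBoards P k M B ↔ (P i).Ahead k M B := by
  simp [aheadBoards]

lemma readyBoards_mono_right (hB : B ⊆ B') : readyBoards P k M B ⊆ readyBoards P k M B' :=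
  fun i => by simpa only [mem_readyBoards] using fun h => h.mono_right hB

lemma aheadBoards_mono_right (hB : B ⊆ B') : aheadBoards P k M B ⊆ aheadBoards P k M B' :=
  fun i => by simpa only [mem_aheadBoards] using fun h => h.mono_right hB

lemma score_mono_right (hB : B ⊆ B') : score P k M B ≤ score P k M B' :=
  add_le_add (Finset.card_le_card (aheadBoards_mono_right hB))
    (Finset.card_le_card (readyBoards_mono_right hB))

lemma aheadBoards_subset_readyBoards (hdis : Disjoint M B) :
    aheadBoards P k M B ⊆ readyBoards P k M B :=
  fun i => by simpa only [mem_aheadBoards, mem_readyBoards] using fun h => h.ready hdis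

lemma score_le_two_mul_card_readyBoards (hdis : Disjoint M B) :
    score P k M B ≤ 2 * #(readyBoards P k M B) := by
  rw [score, two_mul]
  exact Nat.add_le_add_right (Finset.card_le_card (aheadBoards_subset_readyBoards hdis)) _

lemma readyBoards_empty (hcard : ∀ i, #(P i).edges ≤ k) :
    readyBoards P k ∅ ∅ = Finset.univ := by
  refine Finset.eq_univ_of_forall fun i => mem_readyBoards.2 ⟨?_, by simpa [free] using hcard i⟩
  exact ⟨(P i).root, (P i).root_mem, by simp, by simp [Guarded]⟩

lemma card_filter_mem_edges_le_one (hP : Pairwise (Disjoint on fun i => (P i).edges))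
    (e : α) : #{i | e ∈ (P i).edges} ≤ 1 := by
  refine Finset.card_le_one.2 fun i hi j hj => hP.eq fun hij => ?_
  simp only [Finset.mem_filter, Finset.mem_univ, true_and] at hi hj
  exact Finset.disjoint_left.1 hij hi hj

lemma card_readyBoards_le_insert_left
    (hP : Pairwise (Disjoint on fun i => (P i).edges)) :
    #(readyBoards P k M B) ≤ #(readyBoards P k (insert e M) B) + 1 := by
  classical
  refine (Finset.card_le_card fun i hi => ?_).trans ((Finset.card_union_le _ _).trans
    (Nat.add_le_add_left (card_filter_mem_edges_le_one hP e) _))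
  simp only [Finset.mem_union, Finset.mem_filter, Finset.mem_univ, true_and,
    mem_readyBoards] at hi ⊢
  exact or_iff_not_imp_right.2 hi.insert_left_of_notMem

lemma card_aheadBoards_le_insert_left
    (hP : Pairwise (Disjoint on fun i => (P i).edges)) :
    #(aheadBoards P k M B) ≤ #(aheadBoards P k (insert e M) B) + 1 := by
  classical
  refine (Finset.card_le_card fun i hi => ?_).trans ((Finset.card_union_le _ _).trans
    (Nat.add_le_add_left (card_filter_mem_edges_le_one hP e) _))
  simp only [Finset.mem_union, Finset.mem_filter, Finset.mem_univ, true_and,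
    mem_aheadBoards] at hi ⊢
  exact or_iff_not_imp_right.2 hi.insert_left_of_notMem

lemma score_le_insert_left (hP : Pairwise (Disjoint on fun i => (P i).edges))
    (hdis : Disjoint M B) (he : e ∉ B) :
    score P k M B ≤ score P k (insert e M) B + 1 := by
  by_cases hahead : ∀ i, e ∈ (P i).edges → (P i).Ahead k M B
  · have hready : readyBoards P k M B ⊆ readyBoards P k (insert e M) B := fun i hi => by
      rw [mem_readyBoards] at hi ⊢
      by_cases hei : e ∈ (P i).edges
      · exact (hahead i hei).ready_insert_left hdis he
      · exact hi.insert_left_of_notMem hei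
    have := add_le_add (card_aheadBoards_le_insert_left (k := k) (M := M) (B := B) (e := e) hP)
      (Finset.card_le_card hready)
    simp only [score]
    omega
  · push Not at hahead
    obtain ⟨j, hej, hj⟩ := hahead
    have hahead' : aheadBoards P k M B ⊆ aheadBoards P k (insert e M) B := fun i hi => by
      rw [mem_aheadBoards] at hi ⊢
      refine hi.insert_left_of_notMem fun hei => hj ?_
      rwa [← hP.eq fun hij => Finset.disjoint_left.1 hij hei hej]
    exact (add_le_add (Finset.card_le_card hahead') (card_readyBoards_le_insert_left hP)).trans_eq
      (Nat.add_assoc ..).symm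

lemma readyBoards_zero_subset_insert_left (he : e ∉ M ∪ B) :
    readyBoards P 0 M B ⊆ readyBoards P 0 (insert e M) B :=
  fun i => by simpa only [mem_readyBoards] using fun h => h.zero_insert_left he

lemma exists_score_add_two_le (hdis : Disjoint M B)
    (hlt : #(readyBoards P k M B) < #(readyBoards P (k + 1) M B)) :
    ∃ i, ∃ e ∈ (P i).edges, e ∉ M ∪ B ∧ score P k M B + 2 ≤ score P k M (insert e B) := by
  obtain ⟨i, hi, hik⟩ := Finset.exists_mem_notMem_of_card_lt_card hlt
  obtain ⟨e, he, heMB, hahead⟩ :=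
    (mem_readyBoards.1 hi).exists_ahead_insert_right (mt mem_readyBoards.2 hik)
  have hdis' : Disjoint M (insert e B) :=
    Finset.disjoint_insert_right.2 ⟨fun h => heMB (Finset.mem_union_left _ h), hdis⟩
  have hi' : i ∈ aheadBoards P k M (insert e B) := mem_aheadBoards.2 hahead
  have hR : readyBoards P k M B ⊂ readyBoards P k M (insert e B) :=
    (Finset.ssubset_iff_of_subset (readyBoards_mono_right (Finset.subset_insert e B))).2
      ⟨i, aheadBoards_subset_readyBoards hdis' hi', hik⟩
  have hA : aheadBoards P k M B ⊂ aheadBoards P k M (insert e B) :=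
    (Finset.ssubset_iff_of_subset (aheadBoards_mono_right (Finset.subset_insert e B))).2
      ⟨i, hi', fun h => hik (aheadBoards_subset_readyBoards hdis h)⟩
  have := Finset.card_lt_card hR
  have := Finset.card_lt_card hA
  refine ⟨i, e, he, heMB, ?_⟩
  simp only [score]
  omega

lemma exists_reply_score (r : ℕ) (hdis : Disjoint M B) :
    ∃ br : Finset α, (∀ e ∈ br, ∃ i, e ∈ (P i).edges) ∧ Disjoint br (M ∪ B) ∧ #br ≤ r ∧
      (#(readyBoards P (k + 1) M B) ≤ #(readyBoards P k M (B ∪ br)) ∨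
        score P k M B + 2 * r ≤ score P k M (B ∪ br)) := by
  induction r generalizing B with
  | zero => exact ⟨∅, by simp⟩
  | succ r ih =>
    rcases le_or_gt #(readyBoards P (k + 1) M B) #(readyBoards P k M B) with hle | hlt
    · exact ⟨∅, by simp [hle]⟩
    obtain ⟨i, e, hei, he, hscore⟩ := exists_score_add_two_le hdis hlt
    rw [Finset.mem_union, not_or] at he
    obtain ⟨br, hbr, hbrdis, hcard, hprogress⟩ :=
      ih (B := insert e B) (Finset.disjoint_insert_right.2 ⟨he.1, hdis⟩)
    have hmono := Finset.card_le_card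
      (readyBoards_mono_right (P := P) (k := k + 1) (M := M) (Finset.subset_insert e B))
    refine ⟨insert e br, Finset.forall_mem_insert _ _ _ |>.2 ⟨⟨i, hei⟩, hbr⟩, ?_, ?_, ?_⟩
    · rw [Finset.union_insert, Finset.disjoint_insert_right] at hbrdis
      exact Finset.disjoint_insert_left.2 ⟨by simpa using he, hbrdis.2⟩
    · exact (Finset.card_insert_le _ _).trans (Nat.add_le_add_right hcard 1)
    · rw [Finset.union_insert, ← Finset.insert_union]
      omega

/-- Breaker's standing when Maker may still claim `d` edges before his next turn. He needs at least
`(6 * q - 2) ^ k` ready boards with at most `k` free edges to enter phase `k`; then each round of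
phase `k` gains one point of score and costs at most `2 * q - 1` boards with `k + 1` free edges.
Here `s` rounds of the phase have passed. A ready board without free edges is safe forever. -/
def OnTrack (P : ι → PairingBoard α) (q d : ℕ) (M B : Finset α) : Prop :=
  (readyBoards P 0 M B).Nonempty ∨
    ∃ k s, s ≤ 2 * (6 * q - 2) ^ k ∧ (0 < s → s + d ≤ score P k M B) ∧
      (6 * q - 2) ^ (k + 1) + d ≤ #(readyBoards P (k + 1) M B) + (2 * q - 1) * s

variable {q d d' : ℕ}

lemma OnTrack.anti_slack (h : OnTrack P q d M B) (hd : d' ≤ d) : OnTrack P q d' M B := by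
  refine h.imp_right ?_
  rintro ⟨k, s, hs, hscore, hready⟩
  exact ⟨k, s, hs, fun hpos => by have := hscore hpos; omega, by omega⟩

lemma OnTrack.mono_right (h : OnTrack P q d M B) (hB : B ⊆ B') : OnTrack P q d M B' := by
  refine h.imp (fun h0 => h0.mono (readyBoards_mono_right hB)) ?_
  rintro ⟨k, s, hs, hscore, hready⟩
  exact ⟨k, s, hs, fun hpos => (hscore hpos).trans (score_mono_right hB),
    hready.trans (Nat.add_le_add_right (Finset.card_le_card (readyBoards_mono_right hB)) _)⟩

lemma OnTrack.of_le_card_readyBoards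
    (h : (6 * q - 2) ^ k + d ≤ #(readyBoards P k M B)) : OnTrack P q d M B := by
  cases k with
  | zero => exact Or.inl (Finset.card_pos.1 (by simp at h; omega))
  | succ k => exact Or.inr ⟨k, 0, by simpa using h⟩

lemma OnTrack.insert_left (hP : Pairwise (Disjoint on fun i => (P i).edges))
    (h : OnTrack P q (d + 1) M B) (hdis : Disjoint M B) (he : e ∉ M ∪ B) :
    OnTrack P q d (insert e M) B := by
  refine h.imp (fun h0 => h0.mono (readyBoards_zero_subset_insert_left he)) ?_
  rintro ⟨k, s, hs, hscore, hready⟩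
  have hscore' := score_le_insert_left (k := k) hP hdis fun h => he (Finset.mem_union_right M h)
  have hready' := card_readyBoards_le_insert_left (k := k + 1) (M := M) (B := B) (e := e) hP
  exact ⟨k, s, hs, fun hpos => by have := hscore hpos; omega, by omega⟩

lemma OnTrack.union_left (hP : Pairwise (Disjoint on fun i => (P i).edges))
    {mv : Finset α} (h : OnTrack P q #mv M B) (hdis : Disjoint M B)
    (hmv : Disjoint mv (M ∪ B)) : OnTrack P q 0 (M ∪ mv) B := by
  induction mv using Finset.induction_on generalizing M with
  | empty => simpa using h
  | insert e mv he ih =>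
    rw [Finset.disjoint_insert_left] at hmv
    rw [Finset.card_insert_of_notMem he] at h
    rw [Finset.union_insert, ← Finset.insert_union]
    refine ih (h.insert_left hP hdis hmv.1)
      (Finset.disjoint_insert_left.2 ⟨fun h => hmv.1 (Finset.mem_union_right M h), hdis⟩) ?_
    rw [Finset.insert_union, Finset.disjoint_insert_right]
    exact ⟨he, hmv.2⟩

-- Since `6 * q - 2 = 2 * q + 2 * (2 * q - 1)`, a phase of `2 * L` rounds, each costing `2 * q - 1`
-- boards, still leaves `2 * q * L` of them.
lemma phase_budget {L R s : ℕ} (hq : 1 ≤ q) (hs : s ≤ 2 * L)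
    (h : (6 * q - 2) * L ≤ R + (2 * q - 1) * s) : 2 * q * L + (2 * q - 1) * (2 * L - s) ≤ R := by
  obtain ⟨t, ht⟩ := Nat.exists_eq_add_of_le hs
  obtain ⟨c, rfl⟩ := Nat.exists_eq_add_of_le' hq
  rw [ht, Nat.add_sub_cancel_left]
  rw [show 6 * (c + 1) - 2 = 6 * c + 4 by omega, show 2 * (c + 1) - 1 = 2 * c + 1 by omega] at *
  nlinarith

lemma OnTrack.exists_ready (h : OnTrack P q d M B) (hq : 1 ≤ q) : ∃ i k, (P i).Ready k M B := by
  rcases h with ⟨i, hi⟩ | ⟨k, s, hs, -, hready⟩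
  · exact ⟨i, 0, mem_readyBoards.1 hi⟩
  · have hbudget := phase_budget hq hs
      (by rw [← pow_succ']; exact (Nat.le_add_right _ d).trans hready)
    have hpos : 0 < 2 * q * (6 * q - 2) ^ k := Nat.mul_pos (by omega) (Nat.pow_pos (by omega))
    obtain ⟨i, hi⟩ := Finset.card_pos.1 (hpos.trans_le (le_of_add_le_left hbudget))
    exact ⟨i, k + 1, mem_readyBoards.1 hi⟩

lemma OnTrack.exists_reply_of_phase (hq : 1 ≤ q) (hdis : Disjoint M B) {s : ℕ}
    (hs : s < 2 * (6 * q - 2) ^ k) (hscore : 0 < s → s ≤ score P k M B)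
    (hready : (6 * q - 2) ^ (k + 1) ≤ #(readyBoards P (k + 1) M B) + (2 * q - 1) * s) :
    ∃ br : Finset α, (∀ e ∈ br, ∃ i, e ∈ (P i).edges) ∧ Disjoint br (M ∪ B) ∧ #br ≤ q ∧
      OnTrack P q (2 * q - 1) M (B ∪ br) := by
  obtain ⟨br, hbr, hbrdis, hcard, hdone | hgain⟩ := exists_reply_score (P := P) (k := k) q hdis
  · refine ⟨br, hbr, hbrdis, hcard, of_le_card_readyBoards (le_trans ?_ hdone)⟩
    refine le_trans (add_le_add ?_ ?_) (phase_budget hq hs.le (by rwa [← pow_succ']))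
    · exact Nat.le_mul_of_pos_left _ (by omega)
    · exact Nat.le_mul_of_pos_right _ (Nat.sub_pos_of_lt hs)
  · have hmono := Finset.card_le_card
      (readyBoards_mono_right (P := P) (k := k + 1) (M := M)
        (Finset.subset_union_left (s₁ := B) (s₂ := br)))
    refine ⟨br, hbr, hbrdis, hcard, Or.inr ⟨k, s + 1, hs, fun _ => ?_, ?_⟩⟩
    · rcases s.eq_zero_or_pos with rfl | hpos
      · omega
      · have := hscore hpos
        omega
    · rw [Nat.mul_succ]
      omega

lemma OnTrack.exists_reply (h : OnTrack P q 0 M B) (hq : 1 ≤ q) (hdis : Disjoint M B) :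
    ∃ br : Finset α, (∀ e ∈ br, ∃ i, e ∈ (P i).edges) ∧ Disjoint br (M ∪ B) ∧ #br ≤ q ∧
      OnTrack P q (2 * q - 1) M (B ∪ br) := by
  rcases h with hsafe | ⟨k, s, hs, hscore, hready⟩
  · exact ⟨∅, by simp, by simp, by simp, Or.inl (by simpa using hsafe)⟩
  rcases hs.lt_or_eq with hlt | rfl
  · exact exists_reply_of_phase hq hdis hlt hscore hready
  have hpow : 0 < (6 * q - 2) ^ k := Nat.pow_pos (by omega)
  have hnext : (6 * q - 2) ^ k ≤ #(readyBoards P k M B) := by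
    have := (hscore (by omega)).trans (score_le_two_mul_card_readyBoards hdis)
    omega
  cases k with
  | zero =>
    exact ⟨∅, by simp, by simp, by simp,
      Or.inl (by simpa using Finset.card_pos.1 (hpow.trans_le hnext))⟩
  | succ k =>
    exact exists_reply_of_phase (s := 0) hq hdis
      (Nat.mul_pos two_pos (Nat.pow_pos (by omega))) (by simp) hnext

theorem breakerWins_of_forall_not_win {P : ι → PairingBoard Edge} {board : Set Edge}
    {win : Set Edge → Prop} {p T : ℕ} (hboard : board.Finite) (hq : 1 ≤ q) (hp : p ≤ 2 * q - 1)
    (hP : Pairwise (Disjoint on fun i => (P i).edges)) (hsub : ∀ i, ∀ e ∈ (P i).edges, e ∈ board)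
    (hT : ∀ i, #(P i).edges ≤ T) (hcard : (6 * q - 2) ^ T + (2 * q - 1) ≤ Fintype.card ι)
    (hwin : ∀ i (M : Set Edge), (P i).root ∉ M → (P i).mates.IsIndepSet M → ¬ win M) :
    BreakerWins board win p q := by
  refine breakerWins_of_invariant hboard
    (Inv := fun M B => Disjoint M B ∧ OnTrack P q (2 * q - 1) M B) ⟨disjoint_bot_left, ?_⟩
    (fun ⟨hdis, h⟩ => ?_)
    (fun hMC ⟨hdis, h⟩ => ⟨Finset.disjoint_union_right.2 ⟨hdis, hMC⟩,
      h.mono_right Finset.subset_union_left⟩)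
    (fun {M B mv} ⟨hdis, h⟩ hmv hcard => ?_)
  · exact OnTrack.of_le_card_readyBoards (by rwa [readyBoards_empty hT, Finset.card_univ])
  · obtain ⟨i, k, hguardable, -⟩ := h.exists_ready hq
    exact hwin i _ (hguardable.root_notMem hdis) (hguardable.isIndepSet hdis)
  · have hdis' : Disjoint (M ∪ mv) B :=
      Finset.disjoint_union_left.2 ⟨hdis, (Finset.disjoint_union_right.1 hmv).2⟩
    obtain ⟨br, hbr, hbrdis, hbrcard, hbr'⟩ :=
      ((h.anti_slack (hcard.trans hp)).union_left hP hdis hmv).exists_reply hq hdis'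
    refine ⟨br, fun e he => ?_, hbrcard, ?_, hbr'⟩
    · obtain ⟨i, hi⟩ := hbr e he
      exact ⟨hsub i e hi, Finset.disjoint_left.1 hbrdis he⟩
    · exact Finset.disjoint_union_right.2
        ⟨hdis', (Finset.disjoint_union_right.1 hbrdis).1.symm⟩

end Family

end PairingBoard

section Grid

/-- The edges of the self-dual board in columns `o + 1, …, o + n + 1` and rows `1, …, n` of the
lattice: all horizontal edges between these columns, and the vertical edges of the inner columns. -/
noncomputable def copyEdges (n : ℕ) (o : ℤ) : Finset Edge :=
  (Finset.Icc (o + 1) (o + n) ×ˢ Finset.Icc (1 : ℤ) n) ×ˢ {true} ∪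
    (Finset.Icc (o + 2) (o + n) ×ˢ Finset.Icc (1 : ℤ) (n - 1)) ×ˢ {false}

/-- The vertex `v` lies on or below the diagonal `y = x - o`. -/
def BelowDiagonal (o : ℤ) (v : Vtx) : Prop := v.2 ≤ v.1 - o

instance (o : ℤ) (v : Vtx) : Decidable (BelowDiagonal o v) := Int.decLe _ _

/-- The head of an edge when edges on or below the diagonal `y = x - o` point left or down, and all
other edges point right or up. -/
def head (o : ℤ) (e : Edge) : Vtx :=
  if BelowDiagonal o (ends e).1 ∧ BelowDiagonal o (ends e).2 then (ends e).1 else (ends e).2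

/-- The tail of an edge in the orientation of `head`. -/
def tail (o : ℤ) (e : Edge) : Vtx :=
  if BelowDiagonal o (ends e).1 ∧ BelowDiagonal o (ends e).2 then (ends e).2 else (ends e).1

variable {n m : ℕ} {o : ℤ} {e : Edge} {u v : Vtx}

lemma mem_copyEdges : e ∈ copyEdges n o ↔
    (e.2 = true ∧ o + 1 ≤ e.1.1 ∧ e.1.1 ≤ o + n ∧ 1 ≤ e.1.2 ∧ e.1.2 ≤ n) ∨
    (e.2 = false ∧ o + 2 ≤ e.1.1 ∧ e.1.1 ≤ o + n ∧ 1 ≤ e.1.2 ∧ e.1.2 ≤ n - 1) := by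
  simp only [copyEdges, Finset.mem_union, Finset.mem_product, Finset.mem_Icc,
    Finset.mem_singleton]
  tauto

lemma card_copyEdges_le (hn : 1 ≤ n) (o : ℤ) :
    (copyEdges n o).card ≤ n ^ 2 + (n - 1) ^ 2 := by
  refine (Finset.card_union_le _ _).trans_eq ?_
  simp only [Finset.card_product, Int.card_Icc, Finset.card_singleton, mul_one, sq]
  congr 2 <;> omega

lemma eq_or_eq_or_eq_of_head_eq {a b c : Edge} (hab : head o a = head o b)
    (hac : head o a = head o c) : a = b ∨ a = c ∨ b = c := by
  obtain ⟨⟨_, _⟩, _ | _⟩ := a <;> obtain ⟨⟨_, _⟩, _ | _⟩ := b <;>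
    obtain ⟨⟨_, _⟩, _ | _⟩ := c <;> simp only [head, ends, BelowDiagonal] at hab hac <;> grind

lemma joins_symm (h : joins e u v) : joins e v u := Or.symm h

lemma eq_tail_head_or_eq_head_tail (o : ℤ) (h : joins e u v) :
    (u = tail o e ∧ v = head o e) ∨ (u = head o e ∧ v = tail o e) := by
  unfold joins at h
  unfold head tail
  split_ifs <;> grind

lemma head_fst_mem_Icc (he : e ∈ copyEdges n o) (hroot : e ≠ ((o + 1, 1), true)) :
    (head o e).1 ∈ Set.Icc (o + 2) (o + n) := by
  obtain ⟨⟨_, _⟩, _ | _⟩ := e <;>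
    simp only [mem_copyEdges, head, ends, BelowDiagonal, Set.mem_Icc] at he ⊢ <;> grind

lemma mem_copyEdges_of_joins (h : joins e u v) (hu : u ∈ lamVtx m n) (hv : v ∈ lamVtx m n)
    (huo : o + 2 ≤ u.1) (hvo : v.1 ≤ o + n) : e ∈ copyEdges n o := by
  simp only [lamVtx, Set.mem_ofPred_eq] at hu hv
  obtain ⟨⟨_, _⟩, _ | _⟩ := e <;> simp only [mem_copyEdges, joins, ends] at h ⊢ <;> grind

lemma copyEdges_subset_lamEdges (ho : 0 ≤ o) (hm : o + n + 1 ≤ m) (he : e ∈ copyEdges n o) :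
    e ∈ lamEdges m n := by
  obtain ⟨⟨_, _⟩, _ | _⟩ := e <;>
    simp [mem_copyEdges, lamEdges, lamVtx, ends] at he ⊢ <;> omega

lemma disjoint_copyEdges {o' : ℤ} (h : o + n < o' + 1) :
    Disjoint (copyEdges n o) (copyEdges n o') := by
  refine Finset.disjoint_left.2 fun e he he' => ?_
  rw [mem_copyEdges] at he he'
  omega

lemma finite_lamEdges (m n : ℕ) : (lamEdges m n).Finite := by
  refine (((Set.finite_Icc (1 : ℤ) m).prod (Set.finite_Icc (1 : ℤ) n)).prod
    Set.finite_univ).subset fun e he => ?_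
  obtain ⟨hx, hx', hy, hy'⟩ := he.1
  exact ⟨⟨⟨hx, hx'⟩, hy, hy'⟩, trivial⟩

/-- The self-dual board with column offset `o`, where two edges are mates if they have the same
head. -/
noncomputable def gridBoard (hn : 1 ≤ n) (o : ℤ) : PairingBoard Edge where
  edges := copyEdges n o
  root := ((o + 1, 1), true)
  root_mem := by
    simp only [mem_copyEdges, Bool.true_eq_false, false_and, or_false, true_and]
    omega
  mates :=
    { Adj := fun a b => a ≠ b ∧ a ∈ copyEdges n o ∧ b ∈ copyEdges n o ∧ head o a = head o b
      symm := ⟨fun _ _ h => ⟨h.1.symm, h.2.2.1, h.2.1, h.2.2.2.symm⟩⟩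
      loopless := ⟨fun _ h => h.1 rfl⟩ }
  mem_of_adj h := h.2.1
  eq_of_adj hab hac :=
    ((eq_or_eq_or_eq_of_head_eq hab.2.2.2 hac.2.2.2).resolve_left hab.1).resolve_left hac.1

/-- The vertices that can be reached from beyond the copy of the self-dual board at offset `o`, on
its right, along edges of `M` in the copy traversed from tail to head. -/
inductive ReachableFromRight (n : ℕ) (o : ℤ) (M : Set Edge) : Vtx → Prop
  | right {v : Vtx} (hv : o + n + 1 ≤ v.1) : ReachableFromRight n o M v
  | head {e : Edge} (he : e ∈ copyEdges n o) (heM : e ∈ M)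
      (h : ReachableFromRight n o M (tail o e)) : ReachableFromRight n o M (head o e)

variable {M : Set Edge}

lemma ReachableFromRight.le_fst (h : ReachableFromRight n o M v) (hn : 1 ≤ n)
    (hroot : ((o + 1, 1), true) ∉ M) : o + 2 ≤ v.1 := by
  cases h with
  | right hv => omega
  | head he heM _ => exact (head_fst_mem_Icc he (ne_of_mem_of_not_mem heM hroot)).1

-- An edge of `M` used against its orientation must be the edge by which its head was reached, since
-- no other edge of `M` has the same head.
lemma ReachableFromRight.of_joins (h : ReachableFromRight n o M u) (hn : 1 ≤ n)
    (hroot : (gridBoard hn o).root ∉ M) (hM : (gridBoard hn o).mates.IsIndepSet M)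
    (heM : e ∈ M) (huv : joins e u v) (hu : u ∈ lamVtx m n) (hv : v ∈ lamVtx m n) :
    ReachableFromRight n o M v := by
  by_cases hright : o + n + 1 ≤ v.1
  · exact .right hright
  have he : e ∈ copyEdges n o := mem_copyEdges_of_joins huv hu hv (h.le_fst hn hroot) (by omega)
  rcases eq_tail_head_or_eq_head_tail o huv with ⟨rfl, rfl⟩ | ⟨hue, rfl⟩
  · exact .head he heM h
  cases h with
  | right hur =>
    have := (head_fst_mem_Icc he (ne_of_mem_of_not_mem heM hroot)).2
    rw [hue] at hur
    omega
  | head hf hfM hreach =>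
    have hfe : _ = e := by_contra fun hne => hM hfM heM hne ⟨hne, hf, he, hue⟩
    rwa [← hfe]

lemma forall_mem_head?_of_cp {α : Type*} {D : α → Prop} {l : List α}
    (hcp : ∀ p ∈ cp l, D p.2 → D p.1) (hlast : ∀ z ∈ l.getLast?, D z) : ∀ a ∈ l.head?, D a := by
  induction l with
  | nil => simp
  | cons a t ih =>
    cases t with
    | nil => simpa using hlast
    | cons b t =>
      have hb : D b := by
        refine ih (fun p hp => hcp p (List.mem_cons_of_mem _ hp)) (fun z hz => hlast z ?_) b rfl
        rwa [List.getLast?_cons_cons]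
      have ha : D a := hcp (a, b) List.mem_cons_self hb
      simpa using ha

lemma not_hasCrossing_of_isIndepSet (hn : 1 ≤ n) (ho : 0 ≤ o) (hm : o + n + 1 ≤ m)
    (hroot : (gridBoard hn o).root ∉ M) (hM : (gridBoard hn o).mates.IsIndepSet M) :
    ¬ HasCrossing m n M := by
  rintro ⟨l, ⟨a, ha, ha1⟩, ⟨z, hz, hzm⟩, hl, hedges⟩
  have hreach : ReachableFromRight n o M a := by
    refine forall_mem_head?_of_cp (fun p hp h => ?_) (fun w hw => ?_) a ha
    · obtain ⟨e, he, hjoins⟩ := hedges p hp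
      have hmem := List.of_mem_zip (a := p.1) (b := p.2) hp
      exact h.of_joins hn hroot hM he (joins_symm hjoins) (hl _ (List.mem_of_mem_tail hmem.2))
        (hl _ hmem.1)
    · obtain rfl := Option.some.inj (hz.symm.trans hw)
      exact .right (hzm ▸ hm)
  have := hreach.le_fst hn hroot
  omega

lemma pairwise_disjoint_gridBoard (hn : 1 ≤ n) (N : ℕ) :
    Pairwise (Function.onFun Disjoint fun i : Fin N => (gridBoard hn ((n + 1) * i)).edges) := by
  have disjoint_of_lt {i j : Fin N} (hij : i < j) :
      Disjoint (copyEdges n ((n + 1) * i)) (copyEdges n ((n + 1) * j)) := by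
    refine disjoint_copyEdges ?_
    have : (i : ℤ) + 1 ≤ j := by exact_mod_cast hij
    nlinarith
  intro i j hij
  rcases hij.lt_or_gt with h | h
  · exact disjoint_of_lt h
  · exact (disjoint_of_lt h).symm

end Grid

/-- **Theorem 2 (Day–Falgas-Ravry).** Let `n, q` be (positive) natural numbers. There is
a natural number `m₀ = m₀(n,q)` — one may take `m₀ = (n+1)·((6q−2)^T + 2q−1)` where
`T = n² + (n−1)²` — such that for all (positive) natural numbers `p` and `m` with
`p ≤ 2q − 1` and `m ≥ m₀`, Breaker has a winning strategy for the `(p,q)`-crossing game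
on `Λ_{m×n}`. -/
theorem breaker_wins_crossing_game_on_long_lambda
    (n q : ℕ) (hn : 1 ≤ n) (hq : 1 ≤ q) :
    ∃ m₀ : ℕ, m₀ = (n + 1) * ((6 * q - 2) ^ (n ^ 2 + (n - 1) ^ 2) + 2 * q - 1) ∧
      ∀ p m : ℕ, 1 ≤ p → p ≤ 2 * q - 1 → m₀ ≤ m →
        BreakerWins (lamEdges m n) (HasCrossing m n) p q := by
  refine ⟨_, rfl, fun p m _ hp hm => ?_⟩
  set N := (6 * q - 2) ^ (n ^ 2 + (n - 1) ^ 2) + 2 * q - 1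
  have offset_nonneg (i : Fin N) : (0 : ℤ) ≤ (n + 1) * i := by positivity
  have offset_le (i : Fin N) : ((n : ℤ) + 1) * i + n + 1 ≤ m := by
    have := (Nat.mul_le_mul_left (n + 1) i.isLt).trans hm
    push_cast [← Int.ofNat_le, Nat.succ_eq_add_one] at this
    linarith
  exact PairingBoard.breakerWins_of_forall_not_win (finite_lamEdges m n) hq hp
    (pairwise_disjoint_gridBoard hn N)
    (fun i _ => copyEdges_subset_lamEdges (offset_nonneg i) (offset_le i))
    (fun i => card_copyEdges_le hn _) (by simp only [Fintype.card_fin, N]; omega)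
    (fun i _ => not_hasCrossing_of_isIndepSet hn (offset_nonneg i) (offset_le i))

end CrossingGames
end

section
/- For all m, n ∈ ℕ and every bipartition of the edge set E(S_{m×n}) into disjoint sets E₁ and E₂ with E₁ ∪ E₂ = E(S_{m×n}), precisely one of the following two statements holds: E₁ contains a left-right crossing path of S_{m×n}, or E₂* contains a top-bottom crossing dual path of S*_{m×n}. -/
/-!
Both halves compare paths with potentials: two sets of vertices fail to be joined exactly when some
function, constant along every edge, is `0` on the one and `1` on the other.

*At least one crossing.* If both were missing, there would be such potentials `φ` for `E₁` and `ψ`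
for `E₂*`. Since every edge `e` lies in `E₁` or `E₂`, the product of the increment of `φ` along `e`
and that of `ψ` along `e*` vanishes. By a discrete Green identity the signed sum of these products
over the board is determined by the boundary values, and here it is `-1`.

*At most one crossing.* Given a dual walk in `E₂*`, let `φ w` be the number of its signed crossings
with the horizontal ray leaving `w` to the left. As long as an edge is not crossed by the walk, `φ`
changes along it only because of the two ends of the walk, and ends at height `0.5` and `n + 0.5`
contribute nothing. So a top-bottom dual walk makes `φ` a potential separating left from right.
-/

namespace CrossingGames

/-- A dual vertex: `(a,b) : ℤ × ℤ` encodes the dual vertex `(a + 0.5, b + 0.5)` of the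
dual lattice `ℤ² + (0.5, 0.5)`. Dual edges are encoded like lattice edges, in these
shifted coordinates. -/
abbrev DVtx : Type := Vtx

/-- The dual edge `e*` of a lattice edge `e`: the unique edge of the dual lattice
crossing `e` (i.e. having the same midpoint). The horizontal edge `(x+0.5, y)` has the
vertical dual edge joining `(x+0.5, y−0.5)` to `(x+0.5, y+0.5)`, and the vertical edge
`(x, y+0.5)` has the horizontal dual edge joining `(x−0.5, y+0.5)` to `(x+0.5, y+0.5)`,
expressed here in the shifted integer coordinates. -/
def dualEdge (e : Edge) : Edge :=
  if e.2 then ((e.1.1, e.1.2 - 1), false) else ((e.1.1 - 1, e.1.2), true)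

/-- `D` (a set of dual edges) contains all the dual edges of a top-bottom crossing dual
path of a board of width `n`: a dual path joining a dual vertex with second coordinate
`n + 0.5` (encoded `n`) to a dual vertex with second coordinate `0.5` (encoded `0`). -/
def HasDualCrossing (n : ℕ) (D : Set Edge) : Prop :=
  ∃ l : List DVtx,
    (∃ v, l.head? = some v ∧ v.2 = (n : ℤ)) ∧
    (∃ v, l.getLast? = some v ∧ v.2 = 0) ∧
    ∀ p ∈ cp l, ∃ d ∈ D, joins d p.1 p.2

section Separation

variable {α : Type*} {r : α → α → Prop} {A B : Set α}

/-- Some walk along `r` leads from `A` to `B`: the common form of both kinds of crossing. -/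
def Connects (r : α → α → Prop) (A B : Set α) : Prop :=
  ∃ a ∈ A, ∃ b ∈ B, Relation.ReflTransGen r a b

/-- `φ` is a separating potential: the certificate that no walk along `r` leads from `A` to `B`.
It is integer-valued because it will be summed and multiplied. -/
structure IsSeparating (r : α → α → Prop) (A B : Set α) (φ : α → ℤ) : Prop where
  eq_of_rel : ∀ ⦃a b⦄, r a b → φ a = φ b
  eq_zero : ∀ a ∈ A, φ a = 0
  eq_one : ∀ b ∈ B, φ b = 1

theorem IsSeparating.not_connects {φ : α → ℤ} (hφ : IsSeparating r A B φ) :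
    ¬ Connects r A B := by
  rintro ⟨a, ha, b, hb, hab⟩
  have hconst : ∀ v, Relation.ReflTransGen r a v → φ a = φ v := by
    intro v hav
    induction hav with
    | refl => rfl
    | tail _ hvw ih => exact ih.trans (hφ.eq_of_rel hvw)
  simpa [hφ.eq_zero a ha, hφ.eq_one b hb] using hconst b hab

open Classical in
theorem exists_isSeparating_of_not_connects (hr : ∀ ⦃a b⦄, r a b → r b a)
    (h : ¬ Connects r A B) : ∃ φ, IsSeparating r A B φ := by
  refine ⟨fun v => if ∃ a ∈ A, Relation.ReflTransGen r a v then 0 else 1, ?_, ?_, ?_⟩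
  · intro v w hvw
    have hreach : (∃ a ∈ A, Relation.ReflTransGen r a v) ↔ ∃ a ∈ A, Relation.ReflTransGen r a w :=
      ⟨fun ⟨a, ha, hav⟩ => ⟨a, ha, hav.tail hvw⟩, fun ⟨a, ha, haw⟩ => ⟨a, ha, haw.tail (hr hvw)⟩⟩
    simp only [hreach]
  · exact fun a ha => if_pos ⟨a, ha, .refl⟩
  · exact fun b hb => if_neg fun ⟨a, ha, hab⟩ => h ⟨a, ha, b, hb, hab⟩

end Separation

section Walks

theorem forall_mem_cp_iff_isChain {α : Type*} {r : α → α → Prop} {l : List α} :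
    (∀ p ∈ cp l, r p.1 p.2) ↔ l.IsChain r := by
  induction l using List.twoStepInduction with
  | nil => simp [cp]
  | singleton => simp [cp]
  | cons_cons a b l _ ih =>
    rw [List.isChain_cons_cons, ← ih b]
    exact List.forall_mem_cons

theorem connects_iff_exists_isChain {α : Type*} {r : α → α → Prop} {A B : Set α} :
    Connects r A B ↔ ∃ l : List α, (∃ a, l.head? = some a ∧ a ∈ A) ∧
      (∃ b, l.getLast? = some b ∧ b ∈ B) ∧ l.IsChain r := by
  constructor
  · rintro ⟨a, ha, b, hb, hab⟩
    obtain ⟨l, hne, hchain, rfl, rfl⟩ := List.exists_isChain_ne_nil_of_relationReflTransGen hab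
    exact ⟨l, ⟨_, List.head?_eq_some_head hne, ha⟩, ⟨_, List.getLast?_eq_some_getLast hne, hb⟩,
      hchain⟩
  · rintro ⟨l, ⟨a, hal, ha⟩, ⟨b, hbl, hb⟩, hchain⟩
    obtain ⟨hne, rfl⟩ := List.mem_getLast?_eq_getLast hbl
    rw [← List.head_of_mem_head? hal] at ha
    exact ⟨_, ha, _, hb, List.relationReflTransGen_of_exists_isChain l hchain hne⟩

/-- Adjacency in the subgraph of `ℤ²` with edge set `E`. -/
def Linked (E : Set Edge) (u v : Vtx) : Prop :=
  ∃ e ∈ E, joins e u v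

theorem Linked.symm {E : Set Edge} {u v : Vtx} : Linked E u v → Linked E v u :=
  fun ⟨e, he, h⟩ => ⟨e, he, h.symm⟩

theorem linked_ends {E : Set Edge} {e : Edge} (he : e ∈ E) : Linked E (ends e).1 (ends e).2 :=
  ⟨e, he, .inl ⟨rfl, rfl⟩⟩

theorem Linked.mem_lamVtx {m n : ℕ} {E : Set Edge} (hE : E ⊆ lamEdges m n) {u v : Vtx}
    (h : Linked E u v) : v ∈ lamVtx m n := by
  obtain ⟨e, he, ⟨-, rfl⟩ | ⟨rfl, -⟩⟩ := h
  exacts [(hE he).2, (hE he).1]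

/-- The vertices of the board `S_{m×n}` in the column with first coordinate `x`. -/
def column (m n : ℕ) (x : ℤ) : Set Vtx :=
  {v ∈ lamVtx m n | v.1 = x}

theorem mk_mem_column {m n : ℕ} {x y : ℤ} :
    (x, y) ∈ column m n x ↔ 1 ≤ x ∧ x ≤ m ∧ 1 ≤ y ∧ y ≤ n :=
  and_iff_left rfl

/-- The dual vertices with second coordinate `y + 0.5`. -/
def dualRow (y : ℤ) : Set DVtx :=
  {v | v.2 = y}

theorem hasCrossing_iff_connects {m n : ℕ} {E : Set Edge} (hE : E ⊆ lamEdges m n) :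
    HasCrossing m n E ↔ Connects (Linked E) (column m n 1) (column m n m) := by
  rw [connects_iff_exists_isChain]
  constructor
  · rintro ⟨l, ⟨u, hu, hu₁⟩, ⟨v, hv, hvm⟩, hl, hlink⟩
    exact ⟨l, ⟨u, hu, hl u (List.mem_of_mem_head? hu), hu₁⟩,
      ⟨v, hv, hl v (List.mem_of_getLast? hv), hvm⟩, forall_mem_cp_iff_isChain.1 hlink⟩
  · rintro ⟨l, ⟨u, hu, hu_lam, hu₁⟩, ⟨v, hv, -, hvm⟩, hchain⟩
    have hl : ∀ w ∈ l, w ∈ lamVtx m n :=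
      hchain.induction _ l (fun _ _ h _ => h.mem_lamVtx hE)
        fun _ => List.head_of_mem_head? hu ▸ hu_lam
    exact ⟨l, ⟨u, hu, hu₁⟩, ⟨v, hv, hvm⟩, hl, forall_mem_cp_iff_isChain.2 hchain⟩

theorem hasDualCrossing_iff_connects {n : ℕ} {D : Set Edge} :
    HasDualCrossing n D ↔ Connects (Linked D) (dualRow n) (dualRow 0) := by
  simp only [connects_iff_exists_isChain, ← forall_mem_cp_iff_isChain]
  rfl

end Walks

section Green

variable {R : Type*} [CommRing R]

open Finset

theorem sum_sub_mul_eq_neg_sum_mul_sub {h : ℕ → R} {M : ℕ} (h₀ : h 0 = 0) (hM : h M = 0)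
    (g : ℕ → R) :
    ∑ i ∈ range M, (h (i + 1) - h i) * g i =
      -∑ i ∈ range (M - 1), h (i + 1) * (g (i + 1) - g i) := by
  have hparts := sum_range_by_parts g (fun i => h (i + 1) - h i) M
  simp only [sum_range_sub, h₀, hM, sub_zero, smul_eq_mul, mul_zero, zero_sub] at hparts
  simpa only [mul_comm] using hparts

/-- Discrete form of `∬ df ∧ dg = ∮ f dg`. The function `f` lives on the vertices of a board and
`g i j` on the dual vertex half a unit to the right of and below the vertex `(i, j)`. -/
theorem discrete_green {M N : ℕ} {f g : ℕ → ℕ → R} {l r b t : R}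
    (hl : ∀ j ≤ N, f 0 j = l) (hr : ∀ j ≤ N, f M j = r)
    (hb : ∀ i < M, g i 0 = b) (ht : ∀ i < M, g i (N + 1) = t) :
    ∑ j ∈ range (N + 1), ∑ i ∈ range M, (f (i + 1) j - f i j) * (g i (j + 1) - g i j) -
      ∑ j ∈ range N, ∑ i ∈ range (M - 1),
        (f (i + 1) (j + 1) - f (i + 1) j) * (g (i + 1) (j + 1) - g i (j + 1)) =
    (r - l) * (t - b) := by
  let F (j k : ℕ) : R := ∑ i ∈ range M, (f (i + 1) j - f i j) * g i k
  have hhor : ∑ j ∈ range (N + 1), ∑ i ∈ range M, (f (i + 1) j - f i j) * (g i (j + 1) - g i j) =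
      ∑ j ∈ range (N + 1), (F j (j + 1) - F j j) := by
    simp only [F, mul_sub, sum_sub_distrib]
  have hver : ∑ j ∈ range N, ∑ i ∈ range (M - 1),
        (f (i + 1) (j + 1) - f (i + 1) j) * (g (i + 1) (j + 1) - g i (j + 1)) =
      ∑ j ∈ range N, (F j (j + 1) - F (j + 1) (j + 1)) := by
    refine sum_congr rfl fun j hj => ?_
    have hj : j < N := mem_range.1 hj
    have hparts := sum_sub_mul_eq_neg_sum_mul_sub (h := fun i => f i (j + 1) - f i j) (M := M)
      (by simp [hl j hj.le, hl (j + 1) hj]) (by simp [hr j hj.le, hr (j + 1) hj])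
      (fun i => g i (j + 1))
    rw [← neg_eq_iff_eq_neg] at hparts
    rw [← hparts, ← sum_neg_distrib, ← sum_sub_distrib]
    exact sum_congr rfl fun i _ => by ring
  have hrow {j k : ℕ} {a : R} (hj : j ≤ N) (hg : ∀ i < M, g i k = a) : F j k = (r - l) * a := by
    calc F j k = ∑ i ∈ range M, (f (i + 1) j - f i j) * a :=
          sum_congr rfl fun i hi => by rw [hg i (mem_range.1 hi)]
      _ = (r - l) * a := by
          rw [← sum_mul, sum_range_sub (f · j), hl j hj, hr j hj]
  calc _ = F N (N + 1) - F 0 0 := by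
        rw [hhor, hver, sum_sub_distrib, sum_sub_distrib, sum_range_succ (fun j => F j (j + 1)),
          sum_range_succ' (fun j => F j j)]
        ring
    _ = (r - l) * (t - b) := by rw [hrow le_rfl ht, hrow N.zero_le hb, mul_sub]

end Green

section Board

variable {m n : ℕ} {E₁ E₂ : Set Edge}

theorem horizontal_mem_sEdges {x y : ℤ} :
    ((x, y), true) ∈ sEdges m n ↔ 1 ≤ x ∧ x + 1 ≤ m ∧ 1 ≤ y ∧ y ≤ n := by
  grind [sEdges, lamEdges, lamVtx, ends]

theorem vertical_mem_sEdges {x y : ℤ} :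
    ((x, y), false) ∈ sEdges m n ↔ 2 ≤ x ∧ x + 1 ≤ m ∧ 1 ≤ y ∧ y + 1 ≤ n := by
  grind [sEdges, lamEdges, lamVtx, ends]

theorem IsSeparating.sub_mul_sub_dualEdge_eq_zero {A B : Set Vtx} {A' B' : Set DVtx}
    {φ ψ : Vtx → ℤ} (hφ : IsSeparating (Linked E₁) A B φ)
    (hψ : IsSeparating (Linked (dualEdge '' E₂)) A' B' ψ) {e : Edge} (he : e ∈ E₁ ∪ E₂) :
    (φ (ends e).2 - φ (ends e).1) *
      (ψ (ends (dualEdge e)).2 - ψ (ends (dualEdge e)).1) = 0 := by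
  rcases he with he | he
  · rw [hφ.eq_of_rel (linked_ends he), sub_self, zero_mul]
  · rw [hψ.eq_of_rel (linked_ends (Set.mem_image_of_mem dualEdge he)), sub_self, mul_zero]

theorem IsSeparating.not_isSeparating_dual (hm : 1 ≤ m) (hn : 1 ≤ n)
    (hcover : sEdges m n ⊆ E₁ ∪ E₂) {φ ψ : Vtx → ℤ}
    (hφ : IsSeparating (Linked E₁) (column m n 1) (column m n m) φ) :
    ¬ IsSeparating (Linked (dualEdge '' E₂)) (dualRow n) (dualRow 0) ψ := by
  intro hψ
  obtain ⟨M, rfl⟩ := Nat.exists_eq_add_of_le' hm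
  obtain ⟨N, rfl⟩ := Nat.exists_eq_add_of_le' hn
  have hgreen := discrete_green (M := M) (N := N) (l := 0) (r := 1) (b := 1) (t := 0)
    (f := fun i j => φ (i + 1, j + 1)) (g := fun i j => ψ (i + 1, j))
    (fun j hj => hφ.eq_zero _ (mk_mem_column.2 (by omega)))
    (fun j hj => hφ.eq_one _ (mk_mem_column.2 (by omega)))
    (fun i _ => hψ.eq_one _ rfl)
    (fun i _ => hψ.eq_zero _ rfl)
  have hhor : ∀ j ∈ Finset.range (N + 1), ∀ i ∈ Finset.range M,
      (φ (↑(i + 1) + 1, j + 1) - φ (i + 1, j + 1)) *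
        (ψ (i + 1, ↑(j + 1)) - ψ (i + 1, j)) = 0 := by
    intro j hj i hi
    rw [Finset.mem_range] at hi hj
    have he := hcover (horizontal_mem_sEdges (x := i + 1) (y := j + 1) |>.2 (by omega))
    simpa [ends, dualEdge] using hφ.sub_mul_sub_dualEdge_eq_zero hψ he
  have hver : ∀ j ∈ Finset.range N, ∀ i ∈ Finset.range (M - 1),
      (φ (↑(i + 1) + 1, ↑(j + 1) + 1) - φ (↑(i + 1) + 1, j + 1)) *
        (ψ (↑(i + 1) + 1, ↑(j + 1)) - ψ (i + 1, ↑(j + 1))) = 0 := by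
    intro j hj i hi
    rw [Finset.mem_range] at hi hj
    have he := hcover (vertical_mem_sEdges (x := i + 1 + 1) (y := j + 1) |>.2 (by omega))
    simpa [ends, dualEdge] using hφ.sub_mul_sub_dualEdge_eq_zero hψ he
  rw [Finset.sum_eq_zero fun j hj => Finset.sum_eq_zero (hhor j hj),
    Finset.sum_eq_zero fun j hj => Finset.sum_eq_zero (hver j hj)] at hgreen
  norm_num at hgreen

/-- Indicator of the dual vertex `v` lying below the height of the vertex `w`. -/
def below (v : DVtx) (w : Vtx) : ℤ :=
  if v.2 < w.2 then 1 else 0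

/-- Indicator of the edge `e` being crossed by the horizontal ray leaving the dual vertex `v` to the
right. -/
def rightRay (v : DVtx) (e : Edge) : ℤ :=
  if e.2 = false ∧ v.2 = e.1.2 ∧ v.1 < e.1.1 then 1 else 0

/-- Signed crossing of the dual step from `p` to `q` with the horizontal ray leaving the vertex `w`
to the left. Horizontal dual steps never cross it, since then `below q w = below p w`. -/
def leftCrossing (p q : DVtx) (w : Vtx) : ℤ :=
  if p.1 < w.1 then below q w - below p w else 0

theorem leftCrossing_horizontal {x y : ℤ} {f : Edge} (hf : ((x, y), true) ≠ f) {p q : DVtx}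
    (hpq : joins (dualEdge f) p q) : leftCrossing p q (x + 1, y) = leftCrossing p q (x, y) := by
  have hcolumn : p.1 = x → below q (x, y) = below p (x, y) := by
    obtain ⟨⟨a, b⟩, _ | _⟩ := f <;> rcases hpq with ⟨rfl, rfl⟩ | ⟨rfl, rfl⟩ <;>
      grind [below, ends, dualEdge]
  have hshift : p.1 ≠ x → (p.1 < x + 1 ↔ p.1 < x) := by omega
  grind [leftCrossing, below]

theorem leftCrossing_vertical {x y : ℤ} {f : Edge} (hf : ((x, y), false) ≠ f) {p q : DVtx}
    (hpq : joins (dualEdge f) p q) :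
    leftCrossing p q (x, y + 1) - leftCrossing p q (x, y) =
      rightRay q ((x, y), false) - rightRay p ((x, y), false) := by
  have hbelow (v : DVtx) : below v (x, y + 1) - below v (x, y) = if v.2 = y then 1 else 0 := by
    grind [below]
  have hside : q.1 = p.1 ∨ q.2 = p.2 ∧ (p.2 = y → (q.1 < x ↔ p.1 < x)) := by
    obtain ⟨⟨a, b⟩, _ | _⟩ := f <;> rcases hpq with ⟨rfl, rfl⟩ | ⟨rfl, rfl⟩ <;>
      grind [ends, dualEdge]
  grind [leftCrossing, below, rightRay]

theorem leftCrossing_sub_leftCrossing {e f : Edge} (hef : e ≠ f) {p q : DVtx}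
    (hpq : joins (dualEdge f) p q) :
    leftCrossing p q (ends e).2 - leftCrossing p q (ends e).1 = rightRay q e - rightRay p e := by
  obtain ⟨⟨x, y⟩, _ | _⟩ := e
  · exact leftCrossing_vertical hef hpq
  · simpa [ends, rightRay] using sub_eq_zero.2 (leftCrossing_horizontal hef hpq)

theorem snd_eq_or_fst_mem_Ico {f : Edge} (hf : f ∈ sEdges m n) {p q : DVtx}
    (hpq : joins (dualEdge f) p q) : p.2 = q.2 ∨ p.1 ∈ Set.Ico (1 : ℤ) m := by
  obtain ⟨⟨a, b⟩, _ | _⟩ := f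
  · left
    rcases hpq with ⟨rfl, rfl⟩ | ⟨rfl, rfl⟩ <;> rfl
  · right
    obtain ⟨ha, ham, -⟩ := horizontal_mem_sEdges.1 hf
    rcases hpq with ⟨rfl, rfl⟩ | ⟨rfl, rfl⟩ <;> exact ⟨ha, ham⟩

theorem leftCrossing_eq_zero {f : Edge} (hf : f ∈ sEdges m n) {p q : DVtx}
    (hpq : joins (dualEdge f) p q) {w : Vtx} (hw : w.1 = 1) : leftCrossing p q w = 0 := by
  rcases snd_eq_or_fst_mem_Ico hf hpq with hrow | ⟨hp, -⟩
  · simp [leftCrossing, below, hrow]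
  · exact if_neg (by omega)

theorem leftCrossing_eq_below_sub_below {f : Edge} (hf : f ∈ sEdges m n) {p q : DVtx}
    (hpq : joins (dualEdge f) p q) {w : Vtx} (hw : w.1 = m) :
    leftCrossing p q w = below q w - below p w := by
  rcases snd_eq_or_fst_mem_Ico hf hpq with hrow | ⟨-, hp⟩
  · simp [leftCrossing, below, hrow]
  · exact if_pos (by omega)

theorem rightRay_eq_zero {e : Edge} (he : e ∈ lamEdges m n) {v : DVtx} (hv : v.2 = 0 ∨ v.2 = n) :
    rightRay v e = 0 := by
  grind [rightRay, lamEdges, lamVtx, ends]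

theorem exists_potential_of_dual_walk (hdisj : Disjoint E₁ E₂) (hE₂ : E₂ ⊆ sEdges m n) {u v : DVtx}
    (huv : Relation.ReflTransGen (Linked (dualEdge '' E₂)) u v) :
    ∃ φ : Vtx → ℤ,
      (∀ e ∈ E₁, φ (ends e).2 - φ (ends e).1 = rightRay v e - rightRay u e) ∧
      (∀ w, w.1 = 1 → φ w = 0) ∧
      ∀ w : Vtx, w.1 = m → φ w = below v w - below u w := by
  induction huv with
  | refl => exact ⟨0, by simp⟩
  | @tail p q _ hpq ih =>
    obtain ⟨φ, hφ, hleft, hright⟩ := ih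
    obtain ⟨_, ⟨f, hf, rfl⟩, hpq⟩ := hpq
    refine ⟨φ + leftCrossing p q, fun e he => ?_, fun w hw => ?_, fun w hw => ?_⟩
    · have hef : e ≠ f := hdisj.ne_of_mem he hf
      simp only [Pi.add_apply]
      linarith [hφ e he, leftCrossing_sub_leftCrossing hef hpq]
    · simp [hleft w hw, leftCrossing_eq_zero (hE₂ hf) hpq hw]
    · simp [hright w hw, leftCrossing_eq_below_sub_below (hE₂ hf) hpq hw]

theorem exists_isSeparating_of_connects_dual (hdisj : Disjoint E₁ E₂) (hE₁ : E₁ ⊆ lamEdges m n)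
    (hE₂ : E₂ ⊆ sEdges m n)
    (h : Connects (Linked (dualEdge '' E₂)) (dualRow n) (dualRow 0)) :
    ∃ φ, IsSeparating (Linked E₁) (column m n 1) (column m n m) φ := by
  obtain ⟨u, hu, v, hv, huv⟩ := h
  obtain ⟨φ, hφ, hleft, hright⟩ := exists_potential_of_dual_walk hdisj hE₂ huv
  have hconst : ∀ e ∈ E₁, φ (ends e).1 = φ (ends e).2 := by
    intro e he
    have hrays := hφ e he
    rw [rightRay_eq_zero (hE₁ he) (.inr hu), rightRay_eq_zero (hE₁ he) (.inl hv)] at hrays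
    omega
  refine ⟨φ, ?_, fun w hw => hleft w hw.2, fun w hw => ?_⟩
  · rintro _ _ ⟨e, he, ⟨rfl, rfl⟩ | ⟨rfl, rfl⟩⟩
    exacts [hconst e he, (hconst e he).symm]
  · obtain ⟨⟨-, -, hw₁, hwn⟩, hwm⟩ := hw
    have hu_below : below u w = 0 := if_neg (by rw [hu]; omega)
    have hv_below : below v w = 1 := if_pos (by rw [hv]; omega)
    rw [hright w hwm, hu_below, hv_below, sub_zero]

end Board

/-- **Duality dichotomy** (Bollobás–Riordan). For every bipartition of the edge set of
`S_{m×n}` into disjoint sets `E₁` and `E₂`, precisely one of the following holds: `E₁`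
contains a left-right crossing path of `S_{m×n}`, or `E₂*` contains a top-bottom
crossing dual path of `S*_{m×n}`. -/
theorem crossing_dichotomy
    (m n : ℕ) (hm : 1 ≤ m) (hn : 1 ≤ n)
    (E₁ E₂ : Set Edge) (hdisj : Disjoint E₁ E₂) (hcover : E₁ ∪ E₂ = sEdges m n) :
    Xor' (HasCrossing m n E₁) (HasDualCrossing n (dualEdge '' E₂)) := by
  have hE₁ : E₁ ⊆ sEdges m n := hcover ▸ Set.subset_union_left
  have hE₂ : E₂ ⊆ sEdges m n := hcover ▸ Set.subset_union_right
  have hE₁' : E₁ ⊆ lamEdges m n := fun e he => (hE₁ he).1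
  rw [hasCrossing_iff_connects hE₁', hasDualCrossing_iff_connects]
  apply xor_iff_not_iff'.2
  constructor
  · intro hno
    by_contra hno_dual
    obtain ⟨φ, hφ⟩ := exists_isSeparating_of_not_connects (fun _ _ => Linked.symm) hno
    obtain ⟨ψ, hψ⟩ := exists_isSeparating_of_not_connects (fun _ _ => Linked.symm) hno_dual
    exact hφ.not_isSeparating_dual hm hn hcover.ge hψ
  · intro hdual
    obtain ⟨φ, hφ⟩ := exists_isSeparating_of_connects_dual hdisj hE₁' hE₂ hdual
    exact hφ.not_connects

end CrossingGames
end
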